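/- The 15 points of Z(H₃) are exactly the pairwise intersection points of the six lines L₁,…,L₆ (so these lines form a star configuration): for each pair 1 ≤ i < j ≤ 6 there is exactly one point P of Z(H₃) with L_i(P) = L_j(P) = 0; every point of Z(H₃) arises this way from exactly one pair (i,j); and no point of Z(H₃) lies on three of the six lines. -/

import Mathlib

/-- The six linear forms of the `H₃` line configuration, as functions on `ℂ³`. -/
noncomputable def H3L (u : ℂ) : Fin 6 → ((Fin 3 → ℂ) → ℂ) :=
  ![fun v => v 1 - (u - 1) * v 2, fun v => v 1 + (u - 1) * v 2,
    fun v => v 0 - u * v 2, fun v => v 0 + u * v 2,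
    fun v => v 0 - (u - 1) * v 1, fun v => v 0 + (u - 1) * v 1]

/-- The 15 points of the `H₃` root-system configuration. -/
noncomputable def H3pts (u : ℂ) : Fin 15 → (Fin 3 → ℂ) :=
  ![![1,0,0], ![0,1,0], ![0,0,1],
    ![1,u,u^2], ![-1,u,u^2], ![1,-u,u^2], ![1,u,-u^2],
    ![u,-u^2,1], ![-u,u^2,1], ![u,u^2,-1], ![u,u^2,1],
    ![u^2,1,-u], ![u^2,-1,u], ![-u^2,1,u], ![u^2,1,u]]

/-!
Up to nonzero scalars, the coefficient vectors of `L₁, …, L₆` are the six diagonals `(0, u, ±1)`,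
`(1, 0, ±u)`, `(u, ±1, 0)` of the icosahedron. They are equiangular: each has square-length
`N = u + 2`, any two have scalar product `±u`, and `N ^ 2 = 5 * u ^ 2`. The Gram matrix of any three
of them is therefore invertible, so no nonzero vector is annihilated by three of the six forms.
Hence a point known to lie on two of the lines lies on no other line, and it is enough to exhibit
a bijection from the points to the pairs of lines for which each point lies on both lines of its
pair.
-/

open scoped Matrix

section Equiangular

variable {R : Type*} [CommRing R] [NoZeroDivisors R] {N c : R}

theorem det_ne_zero_of_isSymm_of_offDiag_sq_eq {G : Matrix (Fin 3) (Fin 3) R} (hG : G.IsSymm)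
    (hdiag : ∀ i, G i i = N) (hoff : ∀ i j, i ≠ j → G i j ^ 2 = c ^ 2)
    (h₁ : N ^ 2 ≠ c ^ 2) (h₂ : N ^ 2 ≠ 4 * c ^ 2) : G.det ≠ 0 := by
  intro hdet
  have h01 : G 0 1 ^ 2 = c ^ 2 := hoff 0 1 (by decide)
  have h02 : G 0 2 ^ 2 = c ^ 2 := hoff 0 2 (by decide)
  have h12 : G 1 2 ^ 2 = c ^ 2 := hoff 1 2 (by decide)
  have hprod : (G 0 1 * G 0 2 * G 1 2) ^ 2 = c ^ 6 := by
    rw [mul_pow, mul_pow, h01, h02, h12]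
    ring
  have hcubic : N * (N ^ 2 - 3 * c ^ 2) = -2 * (G 0 1 * G 0 2 * G 1 2) := by
    rw [Matrix.det_fin_three, hG.apply 0 1, hG.apply 0 2, hG.apply 1 2, hdiag, hdiag, hdiag] at hdet
    linear_combination hdet + N * (h01 + h02 + h12)
  -- Squaring removes the undetermined sign of the product of the off-diagonal entries.
  have hfactor : (N ^ 2 - c ^ 2) ^ 2 * (N ^ 2 - 4 * c ^ 2) = 0 := by
    linear_combination
      (N * (N ^ 2 - 3 * c ^ 2) - 2 * (G 0 1 * G 0 2 * G 1 2)) * hcubic + 4 * hprod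
  exact mul_ne_zero (pow_ne_zero 2 (sub_ne_zero.2 h₁)) (sub_ne_zero.2 h₂) hfactor

theorem eq_zero_of_dotProduct_equiangular_eq_zero {a : Fin 3 → Fin 3 → R}
    (hself : ∀ i, a i ⬝ᵥ a i = N) (hne : ∀ i j, i ≠ j → (a i ⬝ᵥ a j) ^ 2 = c ^ 2)
    (h₁ : N ^ 2 ≠ c ^ 2) (h₂ : N ^ 2 ≠ 4 * c ^ 2)
    {v : Fin 3 → R} (hv : ∀ i, a i ⬝ᵥ v = 0) : v = 0 := by
  let A := Matrix.of a
  have hgram : (A * Aᵀ).det ≠ 0 :=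
    det_ne_zero_of_isSymm_of_offDiag_sq_eq (Matrix.isSymm_mul_transpose_self A) hself hne h₁ h₂
  have hA : A.det ≠ 0 := by
    rw [Matrix.det_mul] at hgram
    exact left_ne_zero_of_mul hgram
  exact Matrix.eq_zero_of_mulVec_eq_zero hA (funext hv)

end Equiangular

section IcosahedronAxis

variable {R : Type*} [CommRing R] {u : R}

/-- The six diagonals of the icosahedron with vertices the cyclic permutations of `(0, ±u, ±1)`,
one direction vector for each. They are numbered so that the `i`-th one is proportional to the
coefficient vector of the form `H3L u i`. -/
def icosahedronAxis (u : R) : Fin 6 → Fin 3 → R :=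
  ![![0, u, -1], ![0, u, 1], ![1, 0, -u], ![1, 0, u], ![u, -1, 0], ![u, 1, 0]]

theorem icosahedronAxis_dotProduct_self (hu : u ^ 2 = u + 1) (i : Fin 6) :
    icosahedronAxis u i ⬝ᵥ icosahedronAxis u i = u + 2 := by
  fin_cases i <;> simp [icosahedronAxis] <;> linear_combination hu

theorem icosahedronAxis_dotProduct_eq_or_eq_neg (hu : u ^ 2 = u + 1) {i j : Fin 6} (hij : i ≠ j) :
    icosahedronAxis u i ⬝ᵥ icosahedronAxis u j = u ∨
      icosahedronAxis u i ⬝ᵥ icosahedronAxis u j = -u := by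
  fin_cases i <;> fin_cases j <;> simp [icosahedronAxis] at hij ⊢ <;> grind

end IcosahedronAxis

section Incidence

variable {u : ℂ}

theorem H3L_eq_zero_iff_dotProduct_eq_zero (hu : u ^ 2 = u + 1) (i : Fin 6) (v : Fin 3 → ℂ) :
    H3L u i v = 0 ↔ icosahedronAxis u i ⬝ᵥ v = 0 := by
  rw [Matrix.vec3_dotProduct]
  fin_cases i <;> simp [H3L, icosahedronAxis] <;> grind

theorem eq_zero_of_three_H3L_eq_zero (hu : u ^ 2 = u + 1) {i j l : Fin 6}
    (hij : i ≠ j) (hil : i ≠ l) (hjl : j ≠ l) {v : Fin 3 → ℂ}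
    (hi : H3L u i v = 0) (hj : H3L u j v = 0) (hl : H3L u l v = 0) : v = 0 := by
  have hu0 : u ≠ 0 := by
    rintro rfl
    norm_num at hu
  have hsq : (u + 2) ^ 2 = 5 * u ^ 2 := by linear_combination -4 * hu
  have hinj : Function.Injective ![i, j, l] := by
    simp [Function.Injective, Fin.forall_fin_succ, hij, hil, hjl, hij.symm, hil.symm, hjl.symm]
  have hzero : ∀ m, H3L u (![i, j, l] m) v = 0 := by
    simp [Fin.forall_fin_succ, hi, hj, hl]
  refine eq_zero_of_dotProduct_equiangular_eq_zero (a := icosahedronAxis u ∘ ![i, j, l])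
    (fun m => icosahedronAxis_dotProduct_self hu _)
    (fun m n hmn => sq_eq_sq_iff_eq_or_eq_neg.2
      (icosahedronAxis_dotProduct_eq_or_eq_neg hu (hinj.ne hmn))) ?_ ?_
    (fun m => (H3L_eq_zero_iff_dotProduct_eq_zero hu _ v).1 (hzero m))
  · intro h
    exact pow_ne_zero 2 hu0 (by linear_combination (h - hsq) / 4)
  · intro h
    exact pow_ne_zero 2 hu0 (by linear_combination h - hsq)

theorem H3pts_ne_zero (u : ℂ) (k : Fin 15) : H3pts u k ≠ 0 := by
  fin_cases k <;> simp [H3pts]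

/-- The pair of lines through each configuration point, smaller index first; indices start at `0`,
so that `i` stands for `Lᵢ₊₁`. -/
def H3pair : Fin 15 → Fin 6 × Fin 6 :=
  ![(0, 1), (2, 3), (4, 5), (0, 4), (0, 5), (1, 5), (1, 4), (2, 5), (3, 5), (3, 4), (2, 4),
    (1, 3), (1, 2), (0, 3), (0, 2)]

theorem H3pair_fst_lt_snd (k : Fin 15) : (H3pair k).1 < (H3pair k).2 := by
  revert k
  decide

theorem existsUnique_H3pair_eq {i j : Fin 6} (hij : i < j) : ∃! k, H3pair k = (i, j) := by
  revert i j
  unfold ExistsUnique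
  decide

theorem H3L_H3pair_H3pts (hu : u ^ 2 = u + 1) (k : Fin 15) :
    H3L u (H3pair k).1 (H3pts u k) = 0 ∧ H3L u (H3pair k).2 (H3pts u k) = 0 := by
  fin_cases k <;> simp [H3L, H3pts, H3pair] <;> grind

theorem H3L_H3pts_eq_zero_and_iff (hu : u ^ 2 = u + 1) {i j : Fin 6} (hij : i < j) (k : Fin 15) :
    H3L u i (H3pts u k) = 0 ∧ H3L u j (H3pts u k) = 0 ↔ H3pair k = (i, j) := by
  obtain ⟨hfst, hsnd⟩ := H3L_H3pair_H3pts hu k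
  have hlt : (H3pair k).1 < (H3pair k).2 := H3pair_fst_lt_snd k
  have hmem {m : Fin 6} (hm : H3L u m (H3pts u k) = 0) :
      m = (H3pair k).1 ∨ m = (H3pair k).2 := by
    by_contra! hne
    exact H3pts_ne_zero u k
      (eq_zero_of_three_H3L_eq_zero hu hne.1 hne.2 hlt.ne hm hfst hsnd)
  constructor
  · rintro ⟨hi, hj⟩
    have hi_mem := hmem hi
    have hj_mem := hmem hj
    ext <;> grind
  · intro h
    simpa only [h] using And.intro hfst hsnd

end Incidence

/-- The 15 points of `Z(H₃)` are exactly the pairwise intersection points of the six lines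
`L₁, …, L₆` (a star configuration): each pair of lines meets in exactly one configuration
point, each configuration point lies on exactly one pair of the lines, and no configuration
point lies on three of the six lines. -/
theorem H3_star_configuration (u : ℂ) (hu : u ^ 2 = u + 1) :
    (∀ i j : Fin 6, i < j →
      ∃! k : Fin 15, H3L u i (H3pts u k) = 0 ∧ H3L u j (H3pts u k) = 0) ∧
    (∀ k : Fin 15, ∃! p : Fin 6 × Fin 6, p.1 < p.2 ∧
      H3L u p.1 (H3pts u k) = 0 ∧ H3L u p.2 (H3pts u k) = 0) ∧
    (∀ k : Fin 15, ¬ ∃ i j l : Fin 6, i < j ∧ j < l ∧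
      H3L u i (H3pts u k) = 0 ∧ H3L u j (H3pts u k) = 0 ∧ H3L u l (H3pts u k) = 0) := by
  refine ⟨fun i j hij => ?_, fun k => ?_, ?_⟩
  · simpa only [H3L_H3pts_eq_zero_and_iff hu hij] using existsUnique_H3pair_eq hij
  · refine ⟨H3pair k, ⟨H3pair_fst_lt_snd k, H3L_H3pair_H3pts hu k⟩, ?_⟩
    rintro p ⟨hp, hzero⟩
    exact ((H3L_H3pts_eq_zero_and_iff hu hp k).1 hzero).symm
  · rintro k ⟨i, j, l, hij, hjl, hi, hj, hl⟩
    exact H3pts_ne_zero u k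
      (eq_zero_of_three_H3L_eq_zero hu hij.ne (hij.trans hjl).ne hjl.ne hi hj hl)
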